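/- Let φ(x,y,t,ξ) be a real-valued function, smooth for ξ ∈ ℝ^n ∖ {0}, which is positively homogeneous of degree one in ξ. Suppose that at a point (x₀,y₀,t₀,ξ₀) with ξ₀ ≠ 0 and ∇_ξ φ = 0 one has ⟨ξ₀/|ξ₀|, ∇_ξ⟩ ∂_t φ ≠ 0 and the ξ-Hessian (∂²φ/∂ξ_j∂ξ_k) has rank n − 1. Then the function Φ(x,y,t,ξ) = φ(x,y,t,ξ) + t satisfies det( ∂²Φ/∂(t,ξ)∂(t,ξ) ) ≠ 0 at (x₀,y₀,t₀,ξ₀), where ∂²Φ/∂(t,ξ)∂(t,ξ) is the (n+1)×(n+1) Hessian of Φ in the variables (t,ξ). -/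

import Mathlib

/-!
The stationary-phase Hessian computation in the proof of Lemma 2.2: if
`φ(x,y,t,ξ)` is real, smooth for `ξ ≠ 0`, positively homogeneous of degree one in `ξ`,
and if at a point `(x₀,y₀,t₀,ξ₀)` with `ξ₀ ≠ 0` one has `∇_ξ φ = 0`,
`⟨ξ₀/|ξ₀|, ∇_ξ⟩ ∂_t φ ≠ 0`, and the `ξ`-Hessian of `φ` has rank `n-1`, then
`Φ(x,y,t,ξ) = φ(x,y,t,ξ) + t` has nondegenerate `(t,ξ)`-Hessian at that point.
-/

open Set

noncomputable section

/-- Coordinate basis of `ℝ × ℝ^n` indexed by `Fin (n+1)`: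
`b 0 = (1,0)` (the `t`-direction) and `b (j+1) = (0, e_j)` (the `ξ_j`-directions). -/
def txBasis (n : ℕ) : Fin (n + 1) → ℝ × EuclideanSpace ℝ (Fin n) :=
  fun i => Fin.cases (motive := fun _ => ℝ × EuclideanSpace ℝ (Fin n))
    ((1 : ℝ), 0) (fun j => ((0 : ℝ), EuclideanSpace.single j 1)) i

abbrev EE (n : ℕ) := EuclideanSpace ℝ (Fin n)

lemma fderiv_eval_aux {E : Type*} [NormedAddCommGroup E] [NormedSpace ℝ E] (g : E → ℝ) (p a b : E)
    (h : DifferentiableAt ℝ (fderiv ℝ g) p) :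
    fderiv ℝ (fun z => fderiv ℝ g z a) p b = fderiv ℝ (fderiv ℝ g) p b a := by
  have h1 : HasFDerivAt (fun z => fderiv ℝ g z a) _ p :=
    h.hasFDerivAt.clm_apply (hasFDerivAt_const a p)
  rw [h1.fderiv]
  simp

lemma ker_aux {n : ℕ} (H : Matrix (Fin n) (Fin n) ℝ) (hn : 0 < n) (hr : H.rank = n - 1)
    (u v : Fin n → ℝ) (hu : H.mulVec u = 0) (hv : H.mulVec v = 0) (hu0 : u ≠ 0) :
    ∃ a : ℝ, v = a • u := by
  have h1 := LinearMap.finrank_range_add_finrank_ker H.mulVecLin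
  have h2 : Module.finrank ℝ (LinearMap.range H.mulVecLin) = n - 1 := hr
  rw [h2, Module.finrank_fin_fun] at h1
  have h3 : Module.finrank ℝ (LinearMap.ker H.mulVecLin) = 1 := by omega
  have hu' : u ∈ LinearMap.ker H.mulVecLin := by simpa using hu
  have hv' : v ∈ LinearMap.ker H.mulVecLin := by simpa using hv
  have hne : (⟨u, hu'⟩ : LinearMap.ker H.mulVecLin) ≠ 0 := by
    simpa [Subtype.ext_iff] using hu0
  obtain ⟨c, hc⟩ := (finrank_eq_one_iff_of_nonzero' _ hne).1 h3 ⟨v, hv'⟩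
  exact ⟨c, by simpa using (congrArg Subtype.val hc).symm⟩

lemma sum_single_aux {n : ℕ} (v : EE n) : ∑ k, v k • EuclideanSpace.single k (1:ℝ) = v := by
  ext i
  simp [Pi.single_apply]

/-- Nondegeneracy of the `(t,ξ)`-Hessian of `Φ = φ + t` at a
stationary point of a phase function which is homogeneous of degree one in `ξ`. -/
theorem hessian_nondegenerate
    (n : ℕ)
    (φ : EuclideanSpace ℝ (Fin n) → EuclideanSpace ℝ (Fin n) → ℝ →
      EuclideanSpace ℝ (Fin n) → ℝ)
    -- `φ` is smooth (in all variables) where `ξ ≠ 0`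
    (hsmooth : ContDiffOn ℝ (⊤ : ℕ∞)
      (fun p : EuclideanSpace ℝ (Fin n) × EuclideanSpace ℝ (Fin n) × ℝ ×
          EuclideanSpace ℝ (Fin n) => φ p.1 p.2.1 p.2.2.1 p.2.2.2)
      {p | p.2.2.2 ≠ 0})
    -- `φ` is positively homogeneous of degree one in `ξ`
    (hhomog : ∀ x y t ξ, ∀ s : ℝ, 0 < s → φ x y t (s • ξ) = s * φ x y t ξ)
    (x₀ y₀ : EuclideanSpace ℝ (Fin n)) (t₀ : ℝ) (ξ₀ : EuclideanSpace ℝ (Fin n))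
    (hξ₀ : ξ₀ ≠ 0)
    -- `∇_ξ φ = 0` at the base point
    (hcrit : fderiv ℝ (fun ξ => φ x₀ y₀ t₀ ξ) ξ₀ = 0)
    -- `⟨ξ₀/|ξ₀|, ∇_ξ⟩ ∂_t φ ≠ 0` at the base point
    (htrans : fderiv ℝ (fun ξ => deriv (fun t => φ x₀ y₀ t ξ) t₀) ξ₀ (‖ξ₀‖⁻¹ • ξ₀) ≠ 0)
    -- the `ξ`-Hessian of `φ` has rank `n - 1` at the base point
    (hrank :
      (Matrix.of fun j k : Fin n =>
          fderiv ℝ (fun ξ => fderiv ℝ (fun ξ' => φ x₀ y₀ t₀ ξ') ξ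
            (EuclideanSpace.single j 1)) ξ₀ (EuclideanSpace.single k 1)).rank = n - 1) :
    -- conclusion: the `(t,ξ)`-Hessian of `Φ(x₀,y₀,t,ξ) = φ(x₀,y₀,t,ξ) + t` is
    -- nondegenerate at `(t₀, ξ₀)`
    (Matrix.of fun j k : Fin (n + 1) =>
        fderiv ℝ (fun z : ℝ × EuclideanSpace ℝ (Fin n) =>
            fderiv ℝ (fun w : ℝ × EuclideanSpace ℝ (Fin n) => φ x₀ y₀ w.1 w.2 + w.1) z
              (txBasis n j))
          (t₀, ξ₀) (txBasis n k)).det ≠ 0 := by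
  set f : ℝ × EE n → ℝ := fun w => φ x₀ y₀ w.1 w.2 with hf
  have hsm : ∀ z : ℝ × EE n, z.2 ≠ 0 → ContDiffAt ℝ (⊤ : ℕ∞) f z := by
    intro z hz
    have ho : IsOpen {p : EE n × EE n × ℝ × EE n | p.2.2.2 ≠ 0} :=
      isOpen_ne_fun (by fun_prop) (by fun_prop)
    have h1 := hsmooth.contDiffAt (x := (x₀, y₀, z.1, z.2)) (ho.mem_nhds hz)
    have h2 : ContDiffAt ℝ (⊤ : ℕ∞) (fun w : ℝ × EE n => (x₀, y₀, w.1, w.2)) z := by fun_prop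
    exact ContDiffAt.comp (g := fun p : EE n × EE n × ℝ × EE n => φ p.1 p.2.1 p.2.2.1 p.2.2.2) z h1 h2
  have hd : ∀ z : ℝ × EE n, z.2 ≠ 0 → DifferentiableAt ℝ f z := fun z hz =>
    (hsm z hz).differentiableAt (by simp)
  have hd2 : DifferentiableAt ℝ (fderiv ℝ f) (t₀, ξ₀) := by
    have := (hsm (t₀, ξ₀) hξ₀).fderiv_right (m := 1) (by norm_cast)
    exact this.differentiableAt (by simp)
  set B := fderiv ℝ (fderiv ℝ f) (t₀, ξ₀) with hB
  have hevz : ∀ᶠ z : ℝ × EE n in nhds (t₀, ξ₀), z.2 ≠ 0 :=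
    (isOpen_ne_fun (by fun_prop) (by fun_prop) : IsOpen {z : ℝ × EE n | z.2 ≠ 0}).mem_nhds hξ₀
  have hevx : ∀ᶠ ξ : EE n in nhds ξ₀, ξ ≠ 0 := isOpen_ne.mem_nhds hξ₀
  have hι : ∀ ξ : EE n, HasFDerivAt (fun ξ : EE n => (t₀, ξ)) (ContinuousLinearMap.inr ℝ ℝ (EE n)) ξ :=
    fun ξ => hasFDerivAt_prodMk_right t₀ ξ
  have hDι : HasFDerivAt (fun ξ => fderiv ℝ f (t₀, ξ)) (B.comp (ContinuousLinearMap.inr ℝ ℝ (EE n))) ξ₀ :=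
    HasFDerivAt.comp (g := fderiv ℝ f) ξ₀ hd2.hasFDerivAt (hι ξ₀)
  have hDιa : ∀ a v, fderiv ℝ (fun ξ => fderiv ℝ f (t₀, ξ) a) ξ₀ v = B (0, v) a := by
    intro a v
    have h1 : HasFDerivAt (fun ξ => fderiv ℝ f (t₀, ξ) a) _ ξ₀ :=
      hDι.clm_apply (hasFDerivAt_const a ξ₀)
    rw [h1.fderiv]
    simp
  -- symmetric
  have hsymm : ∀ u v, B u v = B v u := by
    intro u v
    have := (hsm (t₀, ξ₀) hξ₀).isSymmSndFDerivAt (by simp; norm_cast)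
    exact this u v
  -- big matrix entries
  have hM : ∀ a b, fderiv ℝ (fun z : ℝ × EE n =>
      fderiv ℝ (fun w : ℝ × EE n => φ x₀ y₀ w.1 w.2 + w.1) z a) (t₀, ξ₀) b = B b a := by
    intro a b
    rw [hB, ← fderiv_eval_aux _ _ _ _ hd2]
    have : (fun z : ℝ × EE n => fderiv ℝ (fun w : ℝ × EE n => φ x₀ y₀ w.1 w.2 + w.1) z a)
        =ᶠ[nhds (t₀, ξ₀)] fun z => fderiv ℝ f z a + a.1 := by
      filter_upwards [hevz] with z hz
      have h1 := (hd z hz).hasFDerivAt.add (hasFDerivAt_fst (𝕜 := ℝ) (p := z))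
      have h2 : HasFDerivAt (fun w : ℝ × EE n => φ x₀ y₀ w.1 w.2 + w.1) _ z := h1
      rw [h2.fderiv]
      simp
    rw [this.fderiv_eq, fderiv_add_const]
  have hH : ∀ a b, fderiv ℝ (fun ξ => fderiv ℝ (fun ξ' => φ x₀ y₀ t₀ ξ') ξ a) ξ₀ b
      = B (0, b) (0, a) := by
    intro a b
    rw [← hDιa]
    have : (fun ξ => fderiv ℝ (fun ξ' => φ x₀ y₀ t₀ ξ') ξ a)
        =ᶠ[nhds ξ₀] fun ξ => fderiv ℝ f (t₀, ξ) (0, a) := by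
      filter_upwards [hevx] with ξ hξ
      have h1 : HasFDerivAt (fun ξ' => φ x₀ y₀ t₀ ξ') _ ξ :=
        HasFDerivAt.comp (g := f) ξ (hd (t₀, ξ) hξ).hasFDerivAt (hι ξ)
      rw [h1.fderiv]
      simp
    rw [this.fderiv_eq]
  have hT : ∀ v, fderiv ℝ (fun ξ => deriv (fun t => φ x₀ y₀ t ξ) t₀) ξ₀ v = B (0, v) (1, 0) := by
    intro v
    rw [← hDιa]
    have : (fun ξ => deriv (fun t => φ x₀ y₀ t ξ) t₀)
        =ᶠ[nhds ξ₀] fun ξ => fderiv ℝ f (t₀, ξ) (1, 0) := by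
      filter_upwards [hevx] with ξ hξ
      have h1 : HasFDerivAt (fun t => φ x₀ y₀ t ξ) _ t₀ :=
        HasFDerivAt.comp (g := f) (f := fun t : ℝ => ((t, ξ) : ℝ × EE n)) t₀
          (hd (t₀, ξ) hξ).hasFDerivAt (hasFDerivAt_prodMk_left (𝕜 := ℝ) t₀ ξ)
      rw [h1.hasDerivAt.deriv]
      simp
    rw [this.fderiv_eq]
  -- Euler
  have hE : ∀ ξ : EE n, ξ ≠ 0 → fderiv ℝ f (t₀, ξ) (0, ξ) = f (t₀, ξ) := by
    intro ξ hξ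
    have hc : HasDerivAt (fun s : ℝ => ((t₀, s • ξ) : ℝ × EE n)) (0, ξ) 1 := by
      have := (hasDerivAt_const (1:ℝ) t₀).prodMk ((hasDerivAt_id (1:ℝ)).smul_const ξ)
      simpa using this
    have h0 : HasFDerivAt f (fderiv ℝ f (t₀, ξ)) (t₀, (1:ℝ) • ξ) := by
      rw [one_smul]; exact (hd (t₀, ξ) hξ).hasFDerivAt
    have h1 : HasDerivAt (fun s : ℝ => f (t₀, s • ξ)) _ 1 := 
      HasFDerivAt.comp_hasDerivAt (l := f) (f := fun s : ℝ => ((t₀, s • ξ) : ℝ × EE n)) (1:ℝ) h0 hc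
    have h2 : HasDerivAt (fun s : ℝ => s * f (t₀, ξ)) (f (t₀, ξ)) 1 := by
      simpa using (hasDerivAt_id (1:ℝ)).mul_const (f (t₀, ξ))
    have h3 : (fun s : ℝ => f (t₀, s • ξ)) =ᶠ[nhds 1] fun s => s * f (t₀, ξ) := by
      filter_upwards [lt_mem_nhds (zero_lt_one (α := ℝ))] with s hs
      exact hhomog _ _ _ _ s hs
    exact h1.unique (h2.congr_of_eventuallyEq h3)
  have hK : ∀ v, B (0, v) (0, ξ₀) = 0 := by
    intro v
    have h1 : HasFDerivAt (fun ξ => fderiv ℝ f (t₀, ξ) (0, ξ)) _ ξ₀ :=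
      hDι.clm_apply (hasFDerivAt_prodMk_right (0:ℝ) ξ₀)
    have h2 : HasFDerivAt (fun ξ => f (t₀, ξ)) _ ξ₀ :=
      HasFDerivAt.comp (g := f) ξ₀ (hd (t₀, ξ₀) hξ₀).hasFDerivAt (hι ξ₀)
    have h3 : (fun ξ => fderiv ℝ f (t₀, ξ) (0, ξ)) =ᶠ[nhds ξ₀] fun ξ => f (t₀, ξ) := by
      filter_upwards [hevx] with ξ hξ using hE ξ hξ
    have h4 := h1.unique (h2.congr_of_eventuallyEq h3)
    have h5 := congrArg (fun L => L v) h4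
    simpa using h5
  have hc : B (0, ξ₀) (1, 0) ≠ 0 := by
    intro h
    apply htrans
    rw [hT]
    have : ((0, ‖ξ₀‖⁻¹ • ξ₀) : ℝ × EE n) = ‖ξ₀‖⁻¹ • (0, ξ₀) := by simp
    rw [this, map_smul, _root_.smul_apply, h, smul_zero]
  have hn : 0 < n := by
    rcases Nat.eq_zero_or_pos n with h | h
    · subst h; exact absurd (Subsingleton.elim _ _) hξ₀
    · exact h
  have hmul : ∀ v : EE n, (∀ j, B (0, v) (0, EuclideanSpace.single j 1) = 0) →
      (Matrix.of fun j k : Fin n =>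
          fderiv ℝ (fun ξ => fderiv ℝ (fun ξ' => φ x₀ y₀ t₀ ξ') ξ
            (EuclideanSpace.single j 1)) ξ₀ (EuclideanSpace.single k 1)).mulVec (fun i => v i) = 0 := by
    intro v hv
    ext j
    have h1 : ((0, v) : ℝ × EE n) = ∑ k, v k • (0, EuclideanSpace.single k (1:ℝ)) := by
      conv_lhs => rw [← sum_single_aux v]
      ext <;> simp [Prod.fst_sum, Prod.snd_sum]
    have h2 := hv j
    rw [h1, map_sum, _root_.sum_apply] at h2
    simp only [map_smul, _root_.smul_apply, smul_eq_mul] at h2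
    simp only [Matrix.mulVec, dotProduct, Matrix.of_apply, hH, Pi.zero_apply]
    refine Eq.trans ?_ h2
    exact Finset.sum_congr rfl fun k _ => mul_comm _ _
  intro hdet
  obtain ⟨v, hv0, hv⟩ := Matrix.exists_mulVec_eq_zero_iff.2 hdet
  set η : EE n := WithLp.toLp 2 (fun k : Fin n => v k.succ) with hη
  have hu : ∀ j, B (v 0, η) (txBasis n j) = 0 := by
    intro j
    have h1 : ((v 0, η) : ℝ × EE n) = ∑ k, v k • txBasis n k := by
      rw [Fin.sum_univ_succ]
      conv_lhs => rw [← sum_single_aux η]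
      ext <;> simp [txBasis, Prod.fst_sum, Prod.snd_sum, hη]
    have h2 := congrFun hv j
    simp only [Matrix.mulVec, dotProduct, Matrix.of_apply, hM, Pi.zero_apply] at h2
    rw [h1, map_sum, _root_.sum_apply, ← h2]
    simp only [map_smul, _root_.smul_apply, smul_eq_mul]
    exact Finset.sum_congr rfl fun k _ => mul_comm _ _
  have hu0 : B (v 0, η) (1, 0) = 0 := hu 0
  have hus : ∀ j : Fin n, B (v 0, η) (0, EuclideanSpace.single j 1) = 0 := fun j => hu j.succ
  have huξ : B (v 0, η) (0, ξ₀) = 0 := by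
    have h1 : ((0, ξ₀) : ℝ × EE n) = ∑ k, ξ₀ k • (0, EuclideanSpace.single k (1:ℝ)) := by
      conv_lhs => rw [← sum_single_aux ξ₀]
      ext <;> simp [Prod.fst_sum, Prod.snd_sum]
    rw [h1, map_sum]
    exact Finset.sum_eq_zero fun k _ => by rw [map_smul, hus, smul_zero]
  have hsplit : ((v 0, η) : ℝ × EE n) = v 0 • (1, 0) + (0, η) := by simp
  have hv00 : v 0 = 0 := by
    rw [hsplit, map_add, map_smul, _root_.add_apply, hK, add_zero,
      _root_.smul_apply, hsymm, smul_eq_mul] at huξ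
    exact (mul_eq_zero.1 huξ).resolve_right hc
  rw [hv00] at hu0
  simp only [hv00] at hus
  obtain ⟨a, ha⟩ := ker_aux _ hn hrank (fun i => ξ₀ i) (fun i => η i)
    (hmul ξ₀ fun j => by rw [hsymm]; exact hK _) (hmul η hus)
    (fun h => hξ₀ (by ext i; exact congrFun h i))
  have hηa : η = a • ξ₀ := by ext i; exact congrFun ha i
  have ha0 : a = 0 := by
    have : ((0, η) : ℝ × EE n) = a • (0, ξ₀) := by rw [hηa]; simp
    rw [this, map_smul, _root_.smul_apply, smul_eq_mul] at hu0
    exact (mul_eq_zero.1 hu0).resolve_right hc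
  apply hv0
  ext i
  refine Fin.cases hv00 (fun j => ?_) i
  have : η j = 0 := by rw [hηa, ha0]; simp
  exact this

end
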